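/- Let d ∈ ℕ with d ≥ 2 and let (e_n) be a sequence of real numbers with e_n ≥ 1. Then there exists a sequence (c_n) of positive real numbers with c_n ≥ 1 and |c_n − e_n| ≤ 2^(d+8)/(log₂ n)^(1/d) for all n ≥ 2, such that for every real α > 3, a random sequence (S_n) in the probability space 𝒢_{(c_n)} almost surely satisfies limsup_{n→∞} F_n(S_n)·(log₂ n)^(−α/d) < ∞; that is, ℙ[ limsup_{n→∞} F_n(S_n)·(log₂ n)^(−α/d) < ∞ ] = 1. -/

import Mathlib

open MeasureTheory

/-- Euclidean distance between two points of the integer lattice `ℤ^d`. -/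
noncomputable def zdist {d : ℕ} (x y : Fin d → ℤ) : ℝ :=
  Real.sqrt (∑ i, ((x i : ℝ) - (y i : ℝ)) ^ 2)

/-- The grid `{1,…,n}^d` as a finset of `ℤ^d`. -/
noncomputable def grid (d n : ℕ) : Finset (Fin d → ℤ) :=
  Fintype.piFinset fun _ => Finset.Icc 1 (n : ℤ)

/-- `F_n(S)`: the least Lipschitz constant (Euclidean metric) of a surjection of `S`
onto the grid `{1,…,n}^d`. -/
noncomputable def Fleast (d n : ℕ) (S : Finset (Fin d → ℤ)) : ℝ :=
  sInf {L : ℝ | ∃ f : (Fin d → ℤ) → (Fin d → ℤ),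
    (∀ x ∈ S, f x ∈ grid d n) ∧
    (∀ y ∈ grid d n, ∃ x ∈ S, f x = y) ∧
    (∀ x ∈ S, ∀ y ∈ S, zdist (f x) (f y) ≤ L * zdist x y)}

/-- The grid `{1,…,m}^d` (with `m : ℤ`), as a finite type. -/
abbrev gridPt (d : ℕ) (m : ℤ) : Type := Fin d → (Finset.Icc (1 : ℤ) m : Finset ℤ)

/-- The space of configurations of `N` points inside the grid `{1,…,m}^d`. -/
abbrev Config (d : ℕ) (m : ℤ) (N : ℕ) : Type := {S : Finset (gridPt d m) // S.card = N}

/-- A configuration in `gridPt d m`, regarded as a finset of the integer lattice. -/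
def toLattice {d : ℕ} {m : ℤ} (S : Finset (gridPt d m)) : Finset (Fin d → ℤ) :=
  S.image fun x i => (x i : ℤ)

instance (d : ℕ) (m : ℤ) (N : ℕ) : MeasurableSpace (Config d m N) := ⊤

/-!
Cut the cube `{1, …, l * 2 ^ k} ^ d` into dyadic cells, halving longest sides first. A Chernoff
bound for uniform random subsets and a union bound show that, outside an event of probability
`O(n⁻²)`, every cell with sides at least `l` contains its mean number of points up to a factor
`1 ± √(log n / mean)`. Repeatedly cutting the cube of side `n` in the proportions of these counts
gives every cell a box whose volume is the number of its points. The mean in the smallest cells is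
about `(log n) ^ 3`, so each of the `d * k` cuts is displaced by only `O((log n) ^ (3 / d - 1))`,
and the box of a cell stays within `O((log n) ^ (3 / d))` of the cell. Hall's theorem for boxes
against unit cubes turns this transport into a bijection onto the grid with the same displacement,
and a displacement `D` costs a Lipschitz constant `O(1 + D)` because distinct lattice points have
distance at least `1`. The Borel–Cantelli lemma concludes. The numbers `c n` are chosen so that
the side `⌊c n * n⌋` is of the form `l * 2 ^ k`.
-/

section UniformSubsets

open Finset

variable {γ : Type*} [DecidableEq γ] {V B : Finset γ} {N : ℕ}

lemma descFactorial_mul_pow_le {n m : ℕ} (hnm : n ≤ m) (j : ℕ) :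
    n.descFactorial j * m ^ j ≤ m.descFactorial j * n ^ j := by
  induction j with
  | zero => simp
  | succ j ih =>
    have hfactor : (n - j) * m ≤ (m - j) * n := by
      rw [Nat.sub_mul, Nat.sub_mul, mul_comm n m]
      exact Nat.sub_le_sub_left (Nat.mul_le_mul_left j hnm) _
    calc n.descFactorial (j + 1) * m ^ (j + 1)
        = ((n - j) * m) * (n.descFactorial j * m ^ j) := by
          rw [Nat.descFactorial_succ, pow_succ]; ring
      _ ≤ ((m - j) * n) * (m.descFactorial j * n ^ j) := Nat.mul_le_mul hfactor ih
      _ = m.descFactorial (j + 1) * n ^ (j + 1) := by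
          rw [Nat.descFactorial_succ, pow_succ]; ring

lemma choose_sub_mul_pow_le {n m j : ℕ} (hnm : n ≤ m) (hjn : j ≤ n) :
    (m - j).choose (n - j) * m ^ j ≤ m.choose n * n ^ j := by
  have hswap : m.choose n * n.descFactorial j = m.descFactorial j * (m - j).choose (n - j) := by
    rw [Nat.descFactorial_eq_factorial_mul_choose, Nat.descFactorial_eq_factorial_mul_choose,
      mul_left_comm, Nat.choose_mul hjn, mul_assoc]
  have hpos : 0 < m.descFactorial j := Nat.descFactorial_pos.2 (hjn.trans hnm)
  refine Nat.le_of_mul_le_mul_left ?_ hpos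
  calc m.descFactorial j * ((m - j).choose (n - j) * m ^ j)
      = m.choose n * (n.descFactorial j * m ^ j) := by rw [← mul_assoc, ← hswap, mul_assoc]
    _ ≤ m.choose n * (m.descFactorial j * n ^ j) :=
        Nat.mul_le_mul_left _ (descFactorial_mul_pow_le hnm j)
    _ = m.descFactorial j * (m.choose n * n ^ j) := by ring

lemma card_powersetCard_filter_superset_le {J : Finset γ} (hJ : J ⊆ V) (hN : N ≤ #V) :
    (#{S ∈ V.powersetCard N | J ⊆ S} : ℝ) ≤ (#V).choose N * ((N : ℝ) / #V) ^ #J := by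
  rcases le_or_gt #J N with hJN | hJN
  · rcases J.eq_empty_or_nonempty with rfl | hne
    · simp
    have hV : (0 : ℝ) < #V := by exact_mod_cast (hne.mono hJ).card_pos
    rw [card_filter_powersetCard_subset J V N hJ hJN, div_pow, ← mul_div_assoc,
      le_div_iff₀ (pow_pos hV _)]
    exact_mod_cast choose_sub_mul_pow_le hN hJN
  · have hempty : {S ∈ V.powersetCard N | J ⊆ S} = ∅ := by
      refine filter_eq_empty_iff.2 fun S hS hJS => ?_
      exact hJN.not_ge ((card_le_card hJS).trans (mem_powersetCard.1 hS).2.le)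
    rw [hempty, card_empty, Nat.cast_zero]
    positivity

-- Expanding `x ^ #(S ∩ B)` over the subsets `J` of `S ∩ B` reduces to counting `S ⊇ J`.
lemma sum_pow_card_inter_le_of_one_le (hB : B ⊆ V) (hN : N ≤ #V) {x : ℝ} (hx : 1 ≤ x) :
    ∑ S ∈ V.powersetCard N, x ^ #(S ∩ B) ≤
      (#V).choose N * (1 + (N : ℝ) / #V * (x - 1)) ^ #B := by
  have hexpand (S : Finset γ) :
      x ^ #(S ∩ B) = ∑ J ∈ B.powerset, if J ⊆ S then (x - 1) ^ #J else 0 := by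
    rw [← sum_filter]
    have hfilter : {J ∈ B.powerset | J ⊆ S} = (S ∩ B).powerset := by
      ext J
      simp only [mem_filter, mem_powerset, subset_inter_iff, and_comm]
    rw [hfilter]
    simpa using (sum_pow_mul_eq_add_pow (x - 1) 1 (S ∩ B)).symm
  calc ∑ S ∈ V.powersetCard N, x ^ #(S ∩ B)
      = ∑ J ∈ B.powerset, #{S ∈ V.powersetCard N | J ⊆ S} * (x - 1) ^ #J := by
        simp only [hexpand]
        rw [sum_comm]
        exact sum_congr rfl fun J _ => by rw [← sum_filter, sum_const, nsmul_eq_mul]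
    _ ≤ ∑ J ∈ B.powerset, (#V).choose N * ((N : ℝ) / #V) ^ #J * (x - 1) ^ #J := by
        refine sum_le_sum fun J hJ => mul_le_mul_of_nonneg_right ?_ (pow_nonneg (by linarith) _)
        exact card_powersetCard_filter_superset_le ((mem_powerset.1 hJ).trans hB) hN
    _ = (#V).choose N * (1 + (N : ℝ) / #V * (x - 1)) ^ #B := by
        rw [add_comm 1, ← sum_pow_mul_eq_add_pow, mul_sum]
        simp only [mul_pow, one_pow, mul_one, mul_assoc]

lemma sum_powersetCard_sdiff (hN : N ≤ #V) {R : Type*} [AddCommMonoid R] (f : Finset γ → R) :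
    ∑ S ∈ V.powersetCard N, f (V \ S) = ∑ S ∈ V.powersetCard (#V - N), f S := by
  refine sum_nbij' (V \ ·) (V \ ·) ?_ ?_ ?_ ?_ fun _ _ => rfl
  · intro S hS
    rw [mem_powersetCard] at hS ⊢
    exact ⟨sdiff_subset, by rw [card_sdiff_of_subset hS.1, hS.2]⟩
  · intro S hS
    rw [mem_powersetCard] at hS ⊢
    exact ⟨sdiff_subset, by rw [card_sdiff_of_subset hS.1, hS.2, Nat.sub_sub_self hN]⟩
  · exact fun S hS => Finset.sdiff_sdiff_eq_self (mem_powersetCard.1 hS).1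
  · exact fun S hS => Finset.sdiff_sdiff_eq_self (mem_powersetCard.1 hS).1

-- The range `x < 1` reduces to `x⁻¹ ≥ 1` by replacing every subset by its complement.
lemma sum_pow_card_inter_le (hB : B ⊆ V) (hN : N ≤ #V) {x : ℝ} (hx : 0 < x) :
    ∑ S ∈ V.powersetCard N, x ^ #(S ∩ B) ≤
      (#V).choose N * (1 + (N : ℝ) / #V * (x - 1)) ^ #B := by
  rcases le_or_gt 1 x with hx1 | hx1
  · exact sum_pow_card_inter_le_of_one_le hB hN hx1
  rcases B.eq_empty_or_nonempty with rfl | hne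
  · simp
  have hV : (#V : ℝ) ≠ 0 := by exact_mod_cast (hne.mono hB).card_ne_zero
  have hpow (S : Finset γ) : x ^ #(S ∩ B) = x ^ #B * x⁻¹ ^ #((V \ S) ∩ B) := by
    have hcard : #(S ∩ B) + #((V \ S) ∩ B) = #B := by
      rw [inter_comm S, inter_comm (V \ S), ← inter_sdiff_assoc, inter_eq_left.2 hB,
        card_inter_add_card_sdiff]
    rw [← hcard, pow_add, inv_pow, mul_assoc, mul_inv_cancel₀ (pow_ne_zero _ hx.ne'), mul_one]
  calc ∑ S ∈ V.powersetCard N, x ^ #(S ∩ B)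
      = x ^ #B * ∑ S ∈ V.powersetCard (#V - N), x⁻¹ ^ #(S ∩ B) := by
        rw [← sum_powersetCard_sdiff hN fun S => x⁻¹ ^ #(S ∩ B), mul_sum]
        exact sum_congr rfl fun S _ => hpow S
    _ ≤ x ^ #B * ((#V).choose (#V - N) * (1 + ((#V - N : ℕ) : ℝ) / #V * (x⁻¹ - 1)) ^ #B) := by
        gcongr
        exact sum_pow_card_inter_le_of_one_le hB (Nat.sub_le _ _) ((one_le_inv₀ hx).2 hx1.le)
    _ = (#V).choose N * (1 + (N : ℝ) / #V * (x - 1)) ^ #B := by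
        rw [Nat.choose_symm hN, mul_left_comm, ← mul_pow, Nat.cast_sub hN]
        congr 2
        field_simp
        ring

lemma sum_exp_mul_card_inter_sub_le (hB : B ⊆ V) (hN : N ≤ #V) {h : ℝ} (hh : |h| ≤ 1) :
    ∑ S ∈ V.powersetCard N, Real.exp (h * (#(S ∩ B) - (N : ℝ) / #V * #B)) ≤
      (#V).choose N * Real.exp ((N : ℝ) / #V * #B * h ^ 2) := by
  set q : ℝ := (N : ℝ) / #V
  have hq : 0 ≤ q := by positivity
  have hq1 : q ≤ 1 := div_le_one_of_le₀ (by exact_mod_cast hN) (by positivity)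
  have hexp : Real.exp h - 1 ≤ h + h ^ 2 := by
    linarith [le_of_abs_le (Real.abs_exp_sub_one_sub_id_le hh)]
  have hbase : 0 ≤ 1 + q * (Real.exp h - 1) := by nlinarith [Real.exp_pos h]
  calc ∑ S ∈ V.powersetCard N, Real.exp (h * (#(S ∩ B) - q * #B))
      = (∑ S ∈ V.powersetCard N, Real.exp h ^ #(S ∩ B)) * Real.exp (-(h * (q * #B))) := by
        rw [sum_mul]
        refine sum_congr rfl fun S _ => ?_
        rw [← Real.exp_nat_mul, ← Real.exp_add]
        ring_nf
    _ ≤ (#V).choose N * (1 + q * (Real.exp h - 1)) ^ #B * Real.exp (-(h * (q * #B))) := by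
        gcongr
        exact sum_pow_card_inter_le hB hN (Real.exp_pos h)
    _ ≤ (#V).choose N * Real.exp (q * (h + h ^ 2)) ^ #B * Real.exp (-(h * (q * #B))) := by
        gcongr
        linarith [Real.add_one_le_exp (q * (h + h ^ 2)), mul_le_mul_of_nonneg_left hexp hq]
    _ = (#V).choose N * Real.exp (q * #B * h ^ 2) := by
        rw [← Real.exp_nat_mul, mul_assoc, ← Real.exp_add]
        ring_nf

lemma card_filter_le_mul_card_inter_sub_le (hB : B ⊆ V) (hN : N ≤ #V) {h : ℝ} (hh : |h| ≤ 1)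
    (u : ℝ) :
    (#{S ∈ V.powersetCard N | u ≤ h * (#(S ∩ B) - (N : ℝ) / #V * #B)} : ℝ) ≤
      (#V).choose N * Real.exp ((N : ℝ) / #V * #B * h ^ 2 - u) := by
  rw [Real.exp_sub, ← mul_div_assoc, le_div_iff₀ (Real.exp_pos u), ← nsmul_eq_mul, ← sum_const]
  refine le_trans ?_ (sum_exp_mul_card_inter_sub_le hB hN hh)
  refine (sum_le_sum fun S hS => Real.exp_le_exp.2 (mem_filter.1 hS).2).trans ?_
  exact sum_le_sum_of_subset_of_nonneg (filter_subset _ _) fun _ _ _ => (Real.exp_pos _).le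

lemma card_filter_le_mul_abs_card_inter_sub_le (hB : B ⊆ V) (hN : N ≤ #V) {h : ℝ} (hh₀ : 0 ≤ h)
    (hh₁ : h ≤ 1) (u : ℝ) :
    (#{S ∈ V.powersetCard N | u ≤ h * |#(S ∩ B) - (N : ℝ) / #V * #B|} : ℝ) ≤
      (#V).choose N * (2 * Real.exp ((N : ℝ) / #V * #B * h ^ 2 - u)) := by
  set r : ℝ := (N : ℝ) / #V * #B
  have habs : |h| ≤ 1 := (abs_of_nonneg hh₀).trans_le hh₁
  have hupper := card_filter_le_mul_card_inter_sub_le hB hN habs u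
  have hlower := card_filter_le_mul_card_inter_sub_le hB hN ((abs_neg h).trans_le habs) u
  have hcover : {S ∈ V.powersetCard N | u ≤ h * |#(S ∩ B) - r|} ⊆
      {S ∈ V.powersetCard N | u ≤ h * (#(S ∩ B) - r)} ∪
        {S ∈ V.powersetCard N | u ≤ -h * (#(S ∩ B) - r)} := by
    intro S
    simp only [mem_union, mem_filter, ← and_or_left]
    refine And.imp_right fun hS => ?_
    rwa [abs_eq_max_neg, mul_max_of_nonneg _ _ hh₀, le_max_iff, mul_neg, ← neg_mul] at hS
  calc (#{S ∈ V.powersetCard N | u ≤ h * |#(S ∩ B) - r|} : ℝ)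
      ≤ #{S ∈ V.powersetCard N | u ≤ h * (#(S ∩ B) - r)} +
          #{S ∈ V.powersetCard N | u ≤ -h * (#(S ∩ B) - r)} := by
        exact_mod_cast (card_le_card hcover).trans (card_union_le _ _)
    _ ≤ (#V).choose N * Real.exp (r * h ^ 2 - u) + (#V).choose N * Real.exp (r * (-h) ^ 2 - u) :=
        add_le_add hupper hlower
    _ = (#V).choose N * (2 * Real.exp (r * h ^ 2 - u)) := by
        rw [neg_sq]
        ring

lemma card_filter_sqrt_lt_abs_card_inter_sub_le (hB : B ⊆ V) (hN : N ≤ #V) {t : ℝ} (ht : 0 ≤ t)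
    (htB : t ≤ (N : ℝ) / #V * #B) :
    (#{S ∈ V.powersetCard N | √(t * ((N : ℝ) / #V * #B)) < |#(S ∩ B) - (N : ℝ) / #V * #B|} : ℝ) ≤
      (#V).choose N * (2 * Real.exp (-(t / 4))) := by
  set r : ℝ := (N : ℝ) / #V * #B with hr
  -- `h * √(t * r) = t / 2` and `r * h ^ 2 = t / 4`: the optimal exponent in Chernoff's bound.
  set h : ℝ := √(t / r) / 2
  have hr₀ : 0 ≤ r := ht.trans htB
  have hh₀ : 0 ≤ h := by positivity
  have hh₁ : h ≤ 1 := by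
    have hsqrt : √(t / r) ≤ 1 := Real.sqrt_le_one.2 (div_le_one_of_le₀ htB hr₀)
    exact (half_le_self (Real.sqrt_nonneg _)).trans hsqrt
  have hcancel : t / r * r = t := div_mul_cancel_of_imp fun hr' => (hr' ▸ htB).antisymm ht
  have hrsq : r * h ^ 2 = t / 4 := by
    rw [div_pow, Real.sq_sqrt (div_nonneg ht hr₀)]
    linarith
  have hdev : h * √(t * r) = t / 2 := by
    rw [div_mul_eq_mul_div, ← Real.sqrt_mul (div_nonneg ht hr₀), mul_left_comm, hcancel,
      Real.sqrt_mul_self ht]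
  have htail := card_filter_le_mul_abs_card_inter_sub_le hB hN hh₀ hh₁ (t / 2)
  rw [← hr, hrsq, show t / 4 - t / 2 = -(t / 4) by ring, ← hdev] at htail
  refine le_trans ?_ htail
  gcongr with S _
  exact fun hS => mul_le_mul_of_nonneg_left hS.le hh₀

end UniformSubsets

section HallCondition

open Finset

variable {β Ω : Type*} {X X₁ X₂ : Finset β} {A A₁ A₂ : β → Set Ω}

/-- The hypothesis of Hall's marriage theorem for points `x ∈ X` that may be sent to the regions
`A x`, where the supply offered by a family of regions is the `μ`-measure of their union. -/
def HallCondition [MeasurableSpace Ω] (μ : Measure Ω) (X : Finset β) (A : β → Set Ω) : Prop :=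
  ∀ U ⊆ X, (#U : ENNReal) ≤ μ (⋃ x ∈ U, A x)

namespace HallCondition

variable [MeasurableSpace Ω] {μ : Measure Ω}

lemma of_forall_subset {Q : Set Ω} (hX : (#X : ENNReal) ≤ μ Q) (hQ : ∀ x ∈ X, Q ⊆ A x) :
    HallCondition μ X A := by
  intro U hU
  rcases U.eq_empty_or_nonempty with rfl | ⟨x, hx⟩
  · simp
  calc (#U : ENNReal) ≤ #X := by exact_mod_cast card_le_card hU
    _ ≤ μ Q := hX
    _ ≤ μ (⋃ x ∈ U, A x) := measure_mono ((hQ x (hU hx)).trans (Set.subset_biUnion_of_mem hx))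

lemma union [DecidableEq β] {Q₁ Q₂ : Set Ω} (hQ : Disjoint Q₁ Q₂) (hQ₂ : MeasurableSet Q₂)
    (h₁ : HallCondition μ X₁ A₁) (h₂ : HallCondition μ X₂ A₂)
    (hA₁ : ∀ x ∈ X₁, A₁ x ⊆ Q₁ ∩ A x) (hA₂ : ∀ x ∈ X₂, A₂ x ⊆ Q₂ ∩ A x) :
    HallCondition μ (X₁ ∪ X₂) A := by
  intro U hU
  have hsub {Y : Finset β} {A' : β → Set Ω} {Q : Set Ω} (hA' : ∀ x ∈ Y, A' x ⊆ Q ∩ A x) :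
      ⋃ x ∈ U ∩ Y, A' x ⊆ Q ∩ ⋃ x ∈ U, A x :=
    Set.iUnion₂_subset fun x hx => (hA' x (mem_inter.1 hx).2).trans
      (Set.inter_subset_inter_right _ (Set.subset_biUnion_of_mem (mem_inter.1 hx).1))
  have hUcard : #U ≤ #(U ∩ X₁) + #(U ∩ X₂) :=
    calc #U = #(U ∩ X₁ ∪ U ∩ X₂) := by rw [← inter_union_distrib_left, inter_eq_left.2 hU]
      _ ≤ #(U ∩ X₁) + #(U ∩ X₂) := card_union_le _ _
  calc (#U : ENNReal) ≤ #(U ∩ X₁) + #(U ∩ X₂) := by exact_mod_cast hUcard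
    _ ≤ μ (⋃ x ∈ U ∩ X₁, A₁ x) + μ (⋃ x ∈ U ∩ X₂, A₂ x) :=
        add_le_add (h₁ _ inter_subset_right) (h₂ _ inter_subset_right)
    _ ≤ μ (Q₁ ∩ ⋃ x ∈ U, A x) + μ (Q₂ ∩ ⋃ x ∈ U, A x) :=
        add_le_add (measure_mono (hsub hA₁)) (measure_mono (hsub hA₂))
    _ ≤ μ ((⋃ x ∈ U, A x) \ Q₂) + μ ((⋃ x ∈ U, A x) ∩ Q₂) := by
        refine add_le_add (measure_mono fun z hz => ⟨hz.2, ?_⟩) (by rw [Set.inter_comm])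
        exact Set.disjoint_left.1 hQ hz.1
    _ = μ (⋃ x ∈ U, A x) := measure_sdiff_add_inter _ hQ₂

lemma exists_injOn {γ : Type*} [Nonempty γ] (h : HallCondition μ X A) {G : Finset γ} {Q : γ → Set Ω}
    (hQ : ∀ g ∈ G, μ (Q g) ≤ 1) (hA : ∀ x ∈ X, A x ⊆ ⋃ g ∈ G, Q g) :
    ∃ f : β → γ, Set.InjOn f X ∧ ∀ x ∈ X, f x ∈ G ∧ (Q (f x) ∩ A x).Nonempty := by
  classical
  set nbrs : X → Finset γ := fun x => {g ∈ G | (Q g ∩ A x).Nonempty}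
  suffices hall : ∀ U : Finset X, #U ≤ #(U.biUnion nbrs) by
    obtain ⟨f, hf, hmem⟩ := (all_card_le_biUnion_card_iff_exists_injective nbrs).1 hall
    have hext (x : X) : Function.extend Subtype.val f (fun _ => Classical.arbitrary γ) x = f x :=
      Subtype.val_injective.extend_apply _ _ x
    refine ⟨Function.extend Subtype.val f fun _ => Classical.arbitrary γ, ?_, fun x hx => ?_⟩
    · intro x hx y hy hxy
      rw [hext ⟨x, hx⟩, hext ⟨y, hy⟩] at hxy
      exact congrArg Subtype.val (hf hxy)
    · rw [hext ⟨x, hx⟩]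
      exact mem_filter.1 (hmem ⟨x, hx⟩)
  intro U
  have hcover : ⋃ x ∈ U.map (.subtype _), A x ⊆ ⋃ g ∈ U.biUnion nbrs, Q g := by
    intro z hz
    simp only [Set.mem_iUnion, mem_map, Function.Embedding.subtype_apply, exists_prop] at hz ⊢
    obtain ⟨_, ⟨x, hxU, rfl⟩, hz⟩ := hz
    obtain ⟨g, hg, hzg⟩ := Set.mem_iUnion₂.1 (hA x x.2 hz)
    exact ⟨g, mem_biUnion.2 ⟨x, hxU, mem_filter.2 ⟨hg, z, hzg, hz⟩⟩, hzg⟩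
  have hle : (#U : ENNReal) ≤ #(U.biUnion nbrs) :=
    calc (#U : ENNReal) = #(U.map (.subtype _)) := by rw [card_map]
      _ ≤ μ (⋃ x ∈ U.map (.subtype _), A x) := h _ (map_subtype_subset U)
      _ ≤ μ (⋃ g ∈ U.biUnion nbrs, Q g) := measure_mono hcover
      _ ≤ ∑ g ∈ U.biUnion nbrs, μ (Q g) := measure_biUnion_finset_le _ _
      _ ≤ #(U.biUnion nbrs) • 1 := by
          refine sum_le_card_nsmul _ _ _ fun g hg => hQ g ?_
          obtain ⟨x, -, hgx⟩ := mem_biUnion.1 hg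
          exact (mem_filter.1 hgx).1
      _ = #(U.biUnion nbrs) := nsmul_one _
  exact_mod_cast hle

end HallCondition

end HallCondition

section DyadicCells

open Finset

/-- The dyadic interval `(index / 2 ^ level, (index + 1) / 2 ^ level]`. -/
structure DyadicInterval where
  /-- The interval has length `1 / 2 ^ level`. -/
  level : ℕ
  /-- The position of the interval among those of its level, counted from `0`. -/
  index : ℕ

namespace DyadicInterval

/-- The lower half of a dyadic interval. -/
def left (I : DyadicInterval) : DyadicInterval := ⟨I.level + 1, 2 * I.index⟩

/-- The upper half of a dyadic interval. -/
def right (I : DyadicInterval) : DyadicInterval := ⟨I.level + 1, 2 * I.index + 1⟩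

/-- The lower endpoint of a dyadic interval scaled by `s`. -/
noncomputable def lower (s : ℝ) (I : DyadicInterval) : ℝ := I.index * (s / 2 ^ I.level)

/-- The upper endpoint of a dyadic interval scaled by `s`. -/
noncomputable def upper (s : ℝ) (I : DyadicInterval) : ℝ := (I.index + 1) * (s / 2 ^ I.level)

/-- The number of integers in a dyadic interval scaled by `l * 2 ^ k`; the truncated subtraction
makes this meaningful only for levels at most `k`. -/
def width (k l : ℕ) (I : DyadicInterval) : ℕ := l * 2 ^ (k - I.level)

/-- The integers in a dyadic interval of level at most `k` scaled by `l * 2 ^ k`. -/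
noncomputable def lattice (k l : ℕ) (I : DyadicInterval) : Finset ℤ :=
  Ioc (I.index * I.width k l : ℤ) ((I.index + 1) * I.width k l)

variable {k l : ℕ} {I : DyadicInterval} {s : ℝ}

lemma level_left : I.left.level = I.level + 1 := rfl

lemma lower_left : I.left.lower s = I.lower s := by
  simp only [lower, left]
  push_cast
  ring

lemma upper_right : I.right.upper s = I.upper s := by
  simp only [upper, right]
  push_cast
  ring

lemma upper_left : I.left.upper s = (I.lower s + I.upper s) / 2 := by
  simp only [lower, upper, left]
  push_cast
  ring

lemma lower_right : I.right.lower s = (I.lower s + I.upper s) / 2 := by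
  simp only [lower, upper, right]
  push_cast
  ring

lemma upper_sub_lower : I.upper s - I.lower s = s / 2 ^ I.level := by
  simp only [lower, upper]
  ring

lemma lower_le_upper (hs : 0 ≤ s) : I.lower s ≤ I.upper s := by
  rw [← sub_nonneg, upper_sub_lower]
  positivity

lemma width_mul_two_pow (hI : I.level ≤ k) : I.width k l * 2 ^ I.level = l * 2 ^ k := by
  rw [width, mul_assoc, ← pow_add, Nat.sub_add_cancel hI]

lemma two_mul_width_left (hI : I.level < k) : 2 * I.left.width k l = I.width k l := by
  rw [width, width, level_left, mul_left_comm, ← pow_succ']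
  congr 2
  lia

lemma card_lattice : #(I.lattice k l) = I.width k l := by
  rw [lattice, Int.card_Ioc]
  ring_nf
  exact Int.toNat_natCast _

lemma lattice_left : I.left.lattice k l =
    Ioc (2 * I.index * I.left.width k l : ℤ) ((2 * I.index + 1) * I.left.width k l) := by
  simp only [lattice, left, Nat.cast_mul, Nat.cast_ofNat]

lemma lattice_right : I.right.lattice k l =
    Ioc ((2 * I.index + 1) * I.left.width k l : ℤ) ((2 * I.index + 2) * I.left.width k l) := by
  simp only [lattice, right, left, width, Nat.cast_add, Nat.cast_mul, Nat.cast_ofNat, Nat.cast_one]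
  ring_nf

lemma lattice_left_union_lattice_right (hI : I.level < k) :
    I.left.lattice k l ∪ I.right.lattice k l = I.lattice k l := by
  rw [lattice_left, lattice_right, lattice, ← two_mul_width_left hI,
    Ioc_union_Ioc_eq_Ioc (by gcongr; lia) (by gcongr; lia), Nat.cast_mul]
  ring_nf

lemma disjoint_lattice_left_lattice_right :
    Disjoint (I.left.lattice k l) (I.right.lattice k l) := by
  rw [lattice_left, lattice_right]
  exact Ioc_disjoint_Ioc_of_le le_rfl

lemma lattice_subset_Icc (hI : I.level ≤ k) (hindex : I.index < 2 ^ I.level) :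
    I.lattice k l ⊆ Icc 1 (l * 2 ^ k : ℕ) := by
  intro x hx
  have hupper : (I.index + 1) * I.width k l ≤ l * 2 ^ k := by
    rw [← width_mul_two_pow hI, mul_comm]
    exact Nat.mul_le_mul_left _ hindex
  obtain ⟨hlo, hhi⟩ := mem_Ioc.1 hx
  refine mem_Icc.2 ⟨Int.add_one_le_of_lt (lt_of_le_of_lt (by positivity) hlo), hhi.trans ?_⟩
  exact_mod_cast hupper

lemma lower_le_and_le_upper_of_mem_lattice (hl : 0 < l) (hs : 0 ≤ s) (hI : I.level ≤ k) {x : ℤ}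
    (hx : x ∈ I.lattice k l) :
    I.lower s ≤ x * (s / (l * 2 ^ k)) ∧ x * (s / (l * 2 ^ k)) ≤ I.upper s := by
  have hscale : s / 2 ^ I.level = I.width k l * (s / (l * 2 ^ k)) := by
    have hwidth : (I.width k l : ℝ) * 2 ^ I.level = l * 2 ^ k := by
      exact_mod_cast width_mul_two_pow hI
    rw [← hwidth]
    have : (I.width k l : ℝ) ≠ 0 := left_ne_zero_of_mul (hwidth.trans_ne (by positivity))
    field_simp
  obtain ⟨hlo, hhi⟩ := mem_Ioc.1 hx
  rw [lower, upper, hscale, ← mul_assoc, ← mul_assoc]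
  constructor <;> gcongr
  · exact_mod_cast hlo.le
  · exact_mod_cast hhi

end DyadicInterval

lemma level_update_le_add_one {ι : Type*} [DecidableEq ι] {C : ι → DyadicInterval} {i : ι}
    {I : DyadicInterval} (hI : I.level = (C i).level + 1)
    (hmin : ∀ j, (C i).level ≤ (C j).level) (hbalanced : ∀ i j, (C i).level ≤ (C j).level + 1)
    (j₁ j₂ : ι) :
    (Function.update C i I j₁).level ≤ (Function.update C i I j₂).level + 1 := by
  have h₁ := hmin j₂
  have h₂ := hbalanced j₁ j₂
  have h₃ := hbalanced j₁ i
  rcases eq_or_ne j₁ i with rfl | hj₁ <;> rcases eq_or_ne j₂ j₁ with rfl | hj₂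
  · simp
  · rw [Function.update_self, Function.update_of_ne hj₂]
    lia
  · simp
  · rw [Function.update_of_ne hj₁, Function.update_apply]
    split_ifs <;> lia

variable {ι : Type*} [Fintype ι] {k l : ℕ} {C : ι → DyadicInterval} {i : ι}

lemma exists_level_lt_and_forall_level_le (h : ∑ i, (k - (C i).level) ≠ 0) :
    ∃ i, (C i).level < k ∧ ∀ j, (C i).level ≤ (C j).level := by
  obtain ⟨i₀, -, hi₀⟩ := exists_ne_zero_of_sum_ne_zero h
  have : Nonempty ι := ⟨i₀⟩
  obtain ⟨i, hmin⟩ := Finite.exists_min fun i => (C i).level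
  exact ⟨i, (hmin i₀).trans_lt (Nat.lt_of_sub_ne_zero hi₀), hmin⟩

variable [DecidableEq ι]

lemma sum_sub_level_update {I : DyadicInterval} (hi : (C i).level < k)
    (hI : I.level = (C i).level + 1) :
    ∑ j, (k - (Function.update C i I j).level) + 1 = ∑ j, (k - (C j).level) := by
  rw [← add_sum_erase _ _ (mem_univ i), ← add_sum_erase _ _ (mem_univ i), Function.update_self, hI,
    sum_congr rfl fun j hj => by rw [Function.update_of_ne (ne_of_mem_erase hj)]]
  lia

/-- The lattice points of the dyadic cell `C` (a product of dyadic intervals) in the cube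
`(0, l * 2 ^ k] ^ ι`. -/
noncomputable def latticeBox (k l : ℕ) (C : ι → DyadicInterval) : Finset (ι → ℤ) :=
  Fintype.piFinset fun i => (C i).lattice k l

lemma mem_latticeBox_update {I : DyadicInterval} {x : ι → ℤ} :
    x ∈ latticeBox k l (Function.update C i I) ↔
      x i ∈ I.lattice k l ∧ ∀ j ≠ i, x j ∈ (C j).lattice k l := by
  rw [latticeBox, Fintype.mem_piFinset]
  exact Function.forall_update_iff C fun j I => x j ∈ I.lattice k l

lemma latticeBox_left_union_latticeBox_right (hi : (C i).level < k) :
    latticeBox k l (Function.update C i (C i).left) ∪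
      latticeBox k l (Function.update C i (C i).right) = latticeBox k l C := by
  ext x
  conv_rhs => rw [← Function.update_eq_self i C]
  rw [mem_union, mem_latticeBox_update, mem_latticeBox_update, mem_latticeBox_update,
    ← or_and_right, ← mem_union, DyadicInterval.lattice_left_union_lattice_right hi]

lemma disjoint_latticeBox_left_latticeBox_right :
    Disjoint (latticeBox k l (Function.update C i (C i).left))
      (latticeBox k l (Function.update C i (C i).right)) := by
  refine disjoint_left.2 fun x hleft hright => ?_
  exact disjoint_left.1 DyadicInterval.disjoint_lattice_left_lattice_right
    (mem_latticeBox_update.1 hleft).1 (mem_latticeBox_update.1 hright).1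

lemma card_inter_latticeBox_left_add_right (X : Finset (ι → ℤ)) (hi : (C i).level < k) :
    #(X ∩ latticeBox k l (Function.update C i (C i).left)) +
      #(X ∩ latticeBox k l (Function.update C i (C i).right)) = #(X ∩ latticeBox k l C) := by
  rw [← latticeBox_left_union_latticeBox_right hi, inter_union_distrib_left,
    card_union_of_disjoint]
  exact disjoint_latticeBox_left_latticeBox_right.mono inter_subset_right inter_subset_right

lemma card_latticeBox : #(latticeBox k l C) = ∏ i, (C i).width k l := by
  simp only [latticeBox, Fintype.card_piFinset, DyadicInterval.card_lattice]

end DyadicCells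

section DyadicTransport

open Finset

lemma volume_pi_Ioc_sub_one {ι : Type*} [Fintype ι] (g : ι → ℤ) :
    volume (Set.univ.pi fun i => Set.Ioc (g i - 1 : ℝ) (g i)) = 1 := by
  simp [Real.volume_pi_Ioc]

variable {ι : Type*} [Fintype ι] [DecidableEq ι] {k l : ℕ} {X : Finset (ι → ℤ)} {s δ E : ℝ}
  {C : ι → DyadicInterval} {i : ι} {a b : ι → ℝ}

/-- Halving a dyadic cell along a side that is at least half as long as every other side divides
the points of `X` in the cell so evenly that, in the cube of side `s`, cutting the side in the
proportion of the two counts instead of at the midpoint moves the cut by at most `δ`. -/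
def SplitsEvenly (k l : ℕ) (X : Finset (ι → ℤ)) (s δ : ℝ) : Prop :=
  ∀ (C : ι → DyadicInterval) (i : ι), (∀ j, (C j).level ≤ k) → (C i).level < k →
    (∀ j, (C j).level ≤ (C i).level + 1) →
    |(#(X ∩ latticeBox k l (Function.update C i (C i).left)) : ℝ) -
        #(X ∩ latticeBox k l (Function.update C i (C i).right))| * (s / 2 ^ (C i).level) ≤
      2 * δ * #(X ∩ latticeBox k l C)

/-- The real box `∏ i, (a i, b i]` has one unit of volume for every point of `X` in the dyadic
cell `C`, and its corners are within `E` of the corners of `C` in the cube of side `s`. -/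
structure IsTransportBox (k l : ℕ) (X : Finset (ι → ℤ)) (s E : ℝ) (C : ι → DyadicInterval)
    (a b : ι → ℝ) : Prop where
  le : a ≤ b
  prod_sub : ∏ i, (b i - a i) = #(X ∩ latticeBox k l C)
  lower_near : ∀ i, |a i - (C i).lower s| ≤ E
  upper_near : ∀ i, |b i - (C i).upper s| ≤ E

lemma abs_lineMap_sub_midpoint_le {a b u v p E δ : ℝ} (hp₀ : 0 ≤ p) (hp₁ : p ≤ 1)
    (ha : |a - u| ≤ E) (hb : |b - v| ≤ E) (hp : |p - 1 / 2| * (v - u) ≤ δ)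
    (huv : u ≤ v) :
    |a + p * (b - a) - (u + v) / 2| ≤ E + δ := by
  have hcut : |(p - 1 / 2) * (v - u)| ≤ δ := by rwa [abs_mul, abs_of_nonneg (sub_nonneg.2 huv)]
  rw [abs_le] at *
  constructor <;> nlinarith

lemma prod_update_mul {f : ι → ℝ} {p : ℝ} :
    ∏ j, Function.update f i (p * f i) j = p * ∏ j, f j := by
  rw [prod_update_of_mem (mem_univ i), mul_assoc, ← prod_update_of_mem (mem_univ i),
    Function.update_eq_self]

lemma exists_proportion {L R w δ : ℝ} (hL : 0 ≤ L) (hR : 0 ≤ R) (hLR : 0 < L + R)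
    (h : |L - R| * w ≤ 2 * δ * (L + R)) :
    ∃ p, 0 ≤ p ∧ p ≤ 1 ∧ L = p * (L + R) ∧ R = (1 - p) * (L + R) ∧ |p - 1 / 2| * w ≤ δ := by
  have hp : |L / (L + R) - 1 / 2| = |L - R| / (2 * (L + R)) := by
    rw [eq_div_iff (by positivity), ← abs_of_pos (mul_pos (two_pos (α := ℝ)) hLR), ← abs_mul]
    congr 1
    field_simp
    ring
  refine ⟨L / (L + R), by positivity, div_le_one_of_le₀ (by linarith) hLR.le, ?_, ?_, ?_⟩
  · field_simp
  · field_simp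
    ring
  · rw [hp, div_mul_eq_mul_div, div_le_iff₀ (by positivity)]
    linarith

namespace IsTransportBox

lemma update_left {m p : ℝ} (h : IsTransportBox k l X s E C a b) (hδ : 0 ≤ δ) (hm : a i ≤ m)
    (hmp : m - a i = p * (b i - a i))
    (hcount : (#(X ∩ latticeBox k l (Function.update C i (C i).left)) : ℝ) =
      p * #(X ∩ latticeBox k l C))
    (hmid : |m - ((C i).lower s + (C i).upper s) / 2| ≤ E + δ) :
    IsTransportBox k l X s (E + δ) (Function.update C i (C i).left) a (Function.update b i m) := by
  refine ⟨le_update_iff.2 ⟨hm, fun j _ => h.le j⟩, ?_, fun j => ?_, fun j => ?_⟩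
  · rw [hcount, ← h.prod_sub, ← prod_update_mul, ← hmp]
    congr with j
    rcases eq_or_ne j i with rfl | hj <;> simp [*]
  · rcases eq_or_ne j i with rfl | hj
    · rw [Function.update_self, DyadicInterval.lower_left]
      linarith [h.lower_near j]
    · rw [Function.update_of_ne hj]
      linarith [h.lower_near j]
  · rcases eq_or_ne j i with rfl | hj
    · rwa [Function.update_self, Function.update_self, DyadicInterval.upper_left]
    · rw [Function.update_of_ne hj, Function.update_of_ne hj]
      linarith [h.upper_near j]

lemma update_right {m p : ℝ} (h : IsTransportBox k l X s E C a b) (hδ : 0 ≤ δ) (hm : m ≤ b i)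
    (hmp : b i - m = p * (b i - a i))
    (hcount : (#(X ∩ latticeBox k l (Function.update C i (C i).right)) : ℝ) =
      p * #(X ∩ latticeBox k l C))
    (hmid : |m - ((C i).lower s + (C i).upper s) / 2| ≤ E + δ) :
    IsTransportBox k l X s (E + δ) (Function.update C i (C i).right) (Function.update a i m) b := by
  refine ⟨update_le_iff.2 ⟨hm, fun j _ => h.le j⟩, ?_, fun j => ?_, fun j => ?_⟩
  · rw [hcount, ← h.prod_sub, ← prod_update_mul, ← hmp]
    congr with j
    rcases eq_or_ne j i with rfl | hj <;> simp [*]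
  · rcases eq_or_ne j i with rfl | hj
    · rwa [Function.update_self, Function.update_self, DyadicInterval.lower_right]
    · rw [Function.update_of_ne hj, Function.update_of_ne hj]
      linarith [h.lower_near j]
  · rcases eq_or_ne j i with rfl | hj
    · rw [Function.update_self, DyadicInterval.upper_right]
      linarith [h.upper_near j]
    · rw [Function.update_of_ne hj]
      linarith [h.upper_near j]

lemma exists_split (h : IsTransportBox k l X s E C a b) (hs : 0 ≤ s) (hδ : 0 ≤ δ)
    (heven : SplitsEvenly k l X s δ) (hlevel : ∀ j, (C j).level ≤ k) (hi : (C i).level < k)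
    (hbalanced : ∀ j, (C j).level ≤ (C i).level + 1) (hne : (X ∩ latticeBox k l C).Nonempty) :
    ∃ m, a i ≤ m ∧ m ≤ b i ∧
      IsTransportBox k l X s (E + δ) (Function.update C i (C i).left) a (Function.update b i m) ∧
      IsTransportBox k l X s (E + δ) (Function.update C i (C i).right)
        (Function.update a i m) b := by
  have hcount : (0 : ℝ) < #(X ∩ latticeBox k l C) := by exact_mod_cast hne.card_pos
  have hsum : (#(X ∩ latticeBox k l (Function.update C i (C i).left)) : ℝ) +
      #(X ∩ latticeBox k l (Function.update C i (C i).right)) = #(X ∩ latticeBox k l C) := by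
    exact_mod_cast card_inter_latticeBox_left_add_right X hi
  have hcut := heven C i hlevel hi hbalanced
  rw [← hsum] at hcount hcut
  obtain ⟨p, hp₀, hp₁, hleft, hright, hp⟩ :=
    exists_proportion (Nat.cast_nonneg _) (Nat.cast_nonneg _) hcount hcut
  rw [hsum] at hleft hright
  rw [← DyadicInterval.upper_sub_lower] at hp
  have hside := sub_nonneg.2 (h.le i)
  have hmid := abs_lineMap_sub_midpoint_le hp₀ hp₁ (h.lower_near i) (h.upper_near i) hp
    (DyadicInterval.lower_le_upper hs)
  have hm_ge : a i ≤ a i + p * (b i - a i) := le_add_of_nonneg_right (mul_nonneg hp₀ hside)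
  have hm_le : a i + p * (b i - a i) ≤ b i := by nlinarith
  exact ⟨a i + p * (b i - a i), hm_ge, hm_le,
    h.update_left hδ hm_ge (by ring) hleft hmid, h.update_right hδ hm_le (by ring) hright hmid⟩

lemma hallCondition_of_level_eq (h : IsTransportBox k l X s E C a b) (hl : 0 < l) (hs : 0 ≤ s)
    (hlevel : ∀ j, (C j).level = k) :
    HallCondition volume (X ∩ latticeBox k l C) fun x =>
      (Set.univ.pi fun i => Set.Ioc (a i) (b i)) ∩
        {z | ∀ i, |z i - x i * (s / (l * 2 ^ k))| ≤ s / 2 ^ k + E} := by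
  refine HallCondition.of_forall_subset (Q := Set.univ.pi fun i => Set.Ioc (a i) (b i)) ?_ ?_
  · rw [Real.volume_pi_Ioc, ← ENNReal.ofReal_prod_of_nonneg fun i _ => sub_nonneg.2 (h.le i),
      h.prod_sub, ENNReal.ofReal_natCast]
  · intro x hx z hz
    refine ⟨hz, fun i => ?_⟩
    have hx' := DyadicInterval.lower_le_and_le_upper_of_mem_lattice hl hs (hlevel i).le
      (Fintype.mem_piFinset.1 (mem_inter.1 hx).2 i)
    have hside := (C i).upper_sub_lower (s := s)
    rw [hlevel i] at hside
    have hz' := hz i (Set.mem_univ i)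
    have hlower := abs_le.1 (h.lower_near i)
    have hupper := abs_le.1 (h.upper_near i)
    rw [abs_le]
    constructor <;> linarith [hz'.1, hz'.2]

lemma hallCondition (hl : 0 < l) (hs : 0 ≤ s) (hδ : 0 ≤ δ) (heven : SplitsEvenly k l X s δ)
    (h : IsTransportBox k l X s E C a b) (hlevel : ∀ j, (C j).level ≤ k)
    (hbalanced : ∀ i j, (C i).level ≤ (C j).level + 1) {T : ℕ}
    (hT : ∑ i, (k - (C i).level) = T) :
    HallCondition volume (X ∩ latticeBox k l C) fun x =>
      (Set.univ.pi fun i => Set.Ioc (a i) (b i)) ∩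
        {z | ∀ i, |z i - x i * (s / (l * 2 ^ k))| ≤ s / 2 ^ k + E + T * δ} := by
  induction T generalizing C a b E with
  | zero =>
    have hlevel_eq (j : ι) : (C j).level = k := by
      have := Finset.sum_eq_zero_iff.1 hT j (mem_univ j)
      have := hlevel j
      lia
    simpa using h.hallCondition_of_level_eq hl hs hlevel_eq
  | succ T ih =>
    rcases (X ∩ latticeBox k l C).eq_empty_or_nonempty with hempty | hne
    · rw [hempty]
      exact HallCondition.of_forall_subset (Q := ∅) (by simp) (by simp)
    obtain ⟨i, hi, hmin⟩ := exists_level_lt_and_forall_level_le (hT.trans_ne T.succ_ne_zero)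
    have hchild {I : DyadicInterval} {a' b' : ι → ℝ} (hI : I.level = (C i).level + 1)
        (h' : IsTransportBox k l X s (E + δ) (Function.update C i I) a' b') :
        HallCondition volume (X ∩ latticeBox k l (Function.update C i I)) fun x =>
          (Set.univ.pi fun i => Set.Ioc (a' i) (b' i)) ∩
            {z | ∀ i, |z i - x i * (s / (l * 2 ^ k))| ≤ s / 2 ^ k + (E + δ) + T * δ} := by
      refine ih h' (Function.forall_update_iff C (fun _ I => I.level ≤ k) |>.2
        ⟨hI.trans_le hi, fun j _ => hlevel j⟩) (level_update_le_add_one hI hmin hbalanced) ?_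
      have := sum_sub_level_update hi hI
      lia
    obtain ⟨m, ham, hmb, hleft, hright⟩ :=
      h.exists_split hs hδ heven hlevel hi (fun j => hbalanced j i) hne
    rw [← latticeBox_left_union_latticeBox_right hi, inter_union_distrib_left]
    refine HallCondition.union (Q₁ := {z | z i ≤ m}) (Q₂ := {z | m < z i})
      (Set.disjoint_left.2 fun _ (hle : _ ≤ m) => hle.not_gt)
      (measurableSet_lt measurable_const (measurable_pi_apply i))
      (hchild rfl hleft) (hchild rfl hright) ?_ ?_
    · rintro x - z ⟨hz, hnear⟩
      rw [Set.pi_univ_Ioc_update_right hmb] at hz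
      exact ⟨hz.1, hz.2, fun j => (hnear j).trans_eq (by push_cast; ring)⟩
    · rintro x - z ⟨hz, hnear⟩
      rw [Set.pi_univ_Ioc_update_left ham] at hz
      exact ⟨hz.1, hz.2, fun j => (hnear j).trans_eq (by push_cast; ring)⟩

end IsTransportBox

/-- The unit interval, whose powers are the root cells of the dyadic subdivision. -/
def DyadicInterval.unit : DyadicInterval := ⟨0, 0⟩

lemma latticeBox_unit : latticeBox k l (fun _ : ι => .unit) =
    Fintype.piFinset fun _ => Icc 1 ((l * 2 ^ k : ℕ) : ℤ) := by
  simp only [latticeBox, DyadicInterval.lattice, DyadicInterval.unit, DyadicInterval.width]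
  congr with _ x
  simp [Int.lt_iff_add_one_le]

lemma isTransportBox_unit (hX : X ⊆ latticeBox k l fun _ => .unit)
    (hcard : (#X : ℝ) = s ^ Fintype.card ι) (hs : 0 ≤ s) :
    IsTransportBox k l X s 0 (fun _ => .unit) 0 (fun _ => s) where
  le _ := hs
  prod_sub := by simp [inter_eq_left.2 hX, hcard]
  lower_near _ := by simp [DyadicInterval.lower, DyadicInterval.unit]
  upper_near _ := by simp [DyadicInterval.upper, DyadicInterval.unit]

lemma pi_Ioc_zero_subset_iUnion_pi_Ioc_sub_one (n : ℕ) :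
    (Set.univ.pi fun _ : ι => Set.Ioc (0 : ℝ) n) ⊆
      ⋃ g ∈ Fintype.piFinset fun _ : ι => Icc 1 (n : ℤ),
        Set.univ.pi fun i => Set.Ioc (g i - 1 : ℝ) (g i) := by
  intro z hz
  refine Set.mem_iUnion₂.2 ⟨fun i => ⌈z i⌉, Fintype.mem_piFinset.2 fun i => ?_, fun i _ => ?_⟩
  · obtain ⟨hpos, hle⟩ := hz i (Set.mem_univ i)
    exact mem_Icc.2 ⟨Int.ceil_pos.2 hpos, Int.ceil_le.2 hle⟩
  · exact ⟨by linarith [Int.ceil_lt_add_one (z i)], Int.le_ceil _⟩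

lemma SplitsEvenly.exists_injOn {n : ℕ} (heven : SplitsEvenly k l X n δ) (hl : 0 < l)
    (hδ : 0 ≤ δ) (hX : X ⊆ latticeBox k l fun _ => .unit) (hcard : #X = n ^ Fintype.card ι) :
    ∃ f : (ι → ℤ) → ι → ℤ, Set.InjOn f X ∧ ∀ x ∈ X,
      f x ∈ (Fintype.piFinset fun _ => Icc 1 (n : ℤ)) ∧
        ∀ i, |(f x i : ℝ) - x i * (n / (l * 2 ^ k))| ≤
          n / 2 ^ k + Fintype.card ι * k * δ + 1 := by
  have hroot : IsTransportBox k l X n 0 (fun _ => .unit) 0 (fun _ => (n : ℝ)) :=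
    isTransportBox_unit hX (by exact_mod_cast hcard) n.cast_nonneg
  have hall := hroot.hallCondition hl n.cast_nonneg hδ heven (fun _ => Nat.zero_le k)
    (fun _ _ => Nat.zero_le _) rfl
  rw [inter_eq_left.2 hX] at hall
  obtain ⟨f, hf, hnear⟩ := hall.exists_injOn (fun g _ => (volume_pi_Ioc_sub_one g).le)
    fun x _ => Set.inter_subset_left.trans (pi_Ioc_zero_subset_iUnion_pi_Ioc_sub_one n)
  refine ⟨f, hf, fun x hx => ⟨(hnear x hx).1, fun i => ?_⟩⟩
  obtain ⟨-, z, hzf, -, hzx⟩ := hnear x hx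
  have hfz := hzf i (Set.mem_univ i)
  have hzx' := hzx i
  simp only [DyadicInterval.unit, Nat.sub_zero, sum_const, card_univ, smul_eq_mul,
    Nat.cast_mul, add_zero] at hzx'
  rw [abs_le] at hzx' ⊢
  constructor <;> linarith [hfz.1, hfz.2]

end DyadicTransport

section LipschitzConstant

open Finset

variable {d : ℕ} {x y : Fin d → ℤ}

lemma abs_sub_le_zdist (i : Fin d) : |(x i : ℝ) - y i| ≤ zdist x y :=
  Real.abs_le_sqrt <|
    single_le_sum (f := fun i => ((x i : ℝ) - y i) ^ 2) (fun _ _ => sq_nonneg _) (mem_univ i)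

lemma one_le_zdist (h : x ≠ y) : 1 ≤ zdist x y := by
  obtain ⟨i, hi⟩ := Function.ne_iff.1 h
  have hint : (1 : ℤ) ≤ |x i - y i| := Int.one_le_abs (sub_ne_zero.2 hi)
  exact le_trans (by exact_mod_cast hint) (abs_sub_le_zdist i)

lemma zdist_le_sqrt_mul {r : ℝ} (hr : 0 ≤ r) (h : ∀ i, |(x i : ℝ) - y i| ≤ r) :
    zdist x y ≤ √d * r := by
  refine Real.sqrt_le_iff.2 ⟨by positivity, ?_⟩
  calc ∑ i, ((x i : ℝ) - y i) ^ 2 ≤ ∑ _i : Fin d, r ^ 2 :=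
        sum_le_sum fun i _ => sq_le_sq' (abs_le.1 (h i)).1 (abs_le.1 (h i)).2
    _ = (√d * r) ^ 2 := by simp [mul_pow]

lemma zdist_le_mul_zdist_of_abs_sub_mul_le {f : (Fin d → ℤ) → Fin d → ℤ} {q D : ℝ} (hq₀ : 0 ≤ q)
    (hq₁ : q ≤ 1) (hx : ∀ i, |(f x i : ℝ) - x i * q| ≤ D)
    (hy : ∀ i, |(f y i : ℝ) - y i * q| ≤ D) :
    zdist (f x) (f y) ≤ √d * (1 + 2 * D) * zdist x y := by
  rcases eq_or_ne x y with rfl | hne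
  · simp [zdist]
  have hdist := one_le_zdist hne
  rw [mul_assoc]
  rcases isEmpty_or_nonempty (Fin d) with _ | ⟨⟨i₀⟩⟩
  · exact absurd (Subsingleton.elim x y) hne
  have hD : 0 ≤ D := (abs_nonneg _).trans (hx i₀)
  refine zdist_le_sqrt_mul (by positivity) fun i => ?_
  calc |(f x i : ℝ) - f y i|
      = |(f x i - x i * q) - (f y i - y i * q) + (x i - y i) * q| := by ring_nf
    _ ≤ |f x i - x i * q| + |f y i - y i * q| + |(x i - y i) * q| :=
        (abs_add_le _ _).trans (by gcongr; exact abs_sub _ _)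
    _ ≤ D + D + zdist x y * 1 := by
        rw [abs_mul, abs_of_nonneg hq₀]
        gcongr
        exacts [hx i, hy i, abs_sub_le_zdist i]
    _ ≤ (1 + 2 * D) * zdist x y := by nlinarith

lemma card_grid (n : ℕ) : #(grid d n) = n ^ d := by
  simp [grid]

lemma Fleast_le {n : ℕ} {S : Finset (Fin d → ℤ)} {f : (Fin d → ℤ) → Fin d → ℤ} {q D : ℝ}
    (hcard : #S = n ^ d) (hinj : Set.InjOn f S) (hmaps : ∀ x ∈ S, f x ∈ grid d n) (hq₀ : 0 ≤ q)
    (hq₁ : q ≤ 1) (hD : 0 ≤ D) (hnear : ∀ x ∈ S, ∀ i, |(f x i : ℝ) - x i * q| ≤ D) :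
    Fleast d n S ≤ √d * (1 + 2 * D) := by
  have hsurj : Set.SurjOn f S (grid d n) :=
    surjOn_of_injOn_of_card_le f hmaps hinj (by rw [card_grid, hcard])
  rw [Fleast]
  refine (em (BddBelow _)).elim (fun hbdd => csInf_le hbdd ?_) fun hbdd => ?_
  · exact ⟨f, hmaps, fun y hy => hsurj hy, fun x hx y hy =>
      zdist_le_mul_zdist_of_abs_sub_mul_le hq₀ hq₁ (hnear x hx) (hnear y hy)⟩
  · rw [Real.sInf_of_not_bddBelow hbdd]
    positivity

end LipschitzConstant

section Discrepancy

open Finset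

variable {ι : Type*} [Fintype ι] {k l m : ℕ} {s t δ : ℝ} {C : ι → DyadicInterval} {i : ι}

/-- The volume of a dyadic cell in the cube of side `s`, which is the mean number of points in the
cell when `s ^ card ι` points are distributed uniformly. -/
noncomputable def meanCount (s : ℝ) (C : ι → DyadicInterval) : ℝ := ∏ i, s / 2 ^ (C i).level

lemma pow_le_meanCount (hs : 0 ≤ s) (hlevel : ∀ j, (C j).level ≤ m) :
    (s / 2 ^ m) ^ Fintype.card ι ≤ meanCount s C := by
  rw [← card_univ, ← prod_const, meanCount]
  gcongr with j
  exacts [one_le_two, hlevel j]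

lemma two_mul_mul_sq_le_sq_mul_meanCount (hs : 0 < s) (hd : 2 ≤ Fintype.card ι)
    (htδ : 2 ^ (Fintype.card ι + 1) * t ≤ δ ^ 2 * (s / 2 ^ k) ^ (Fintype.card ι - 2))
    (hi : (C i).level ≤ k) (hbalanced : ∀ j, (C j).level ≤ (C i).level + 1) :
    2 * t * (s / 2 ^ (C i).level) ^ 2 ≤ δ ^ 2 * meanCount s C := by
  set w := s / 2 ^ (C i).level
  have hsw : s / 2 ^ k ≤ w := by
    unfold w
    gcongr
    exact one_le_two
  have hmean : w ^ Fintype.card ι / 2 ^ Fintype.card ι ≤ meanCount s C := by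
    refine le_trans (le_of_eq ?_) (pow_le_meanCount hs.le hbalanced)
    rw [← div_pow, pow_succ, ← div_div]
  have hscale : 2 ^ (Fintype.card ι + 1) * t * w ^ 2 ≤ δ ^ 2 * w ^ Fintype.card ι := by
    rw [← pow_sub_mul_pow w hd, ← mul_assoc]
    refine mul_le_mul_of_nonneg_right (htδ.trans ?_) (sq_nonneg w)
    gcongr
  calc 2 * t * w ^ 2 = 2 ^ (Fintype.card ι + 1) * t * w ^ 2 / 2 ^ Fintype.card ι := by
        field_simp
        ring
    _ ≤ δ ^ 2 * w ^ Fintype.card ι / 2 ^ Fintype.card ι := by gcongr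
    _ ≤ δ ^ 2 * meanCount s C := by
        rw [mul_div_assoc]
        gcongr

variable [DecidableEq ι] {X : Finset (ι → ℤ)}

lemma meanCount_update {I : DyadicInterval} (hI : I.level = (C i).level + 1) :
    meanCount s (Function.update C i I) = meanCount s C / 2 := by
  rw [meanCount, meanCount, div_eq_inv_mul, ← prod_update_mul (i := i)]
  congr with j
  rcases eq_or_ne j i with rfl | hj
  · rw [Function.update_self, Function.update_self, hI]
    ring
  · rw [Function.update_of_ne hj, Function.update_of_ne hj]

/-- Every dyadic cell of level at most `k` in the unit cube contains its mean number of points of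
`X`, up to `√t` standard deviations. -/
def HasSmallDiscrepancy (k l : ℕ) (X : Finset (ι → ℤ)) (s t : ℝ) : Prop :=
  ∀ C : ι → DyadicInterval, (∀ j, (C j).level ≤ k ∧ (C j).index < 2 ^ (C j).level) →
    |(#(X ∩ latticeBox k l C) : ℝ) - meanCount s C| ≤ √(t * meanCount s C)

lemma DyadicInterval.index_lt_of_mem_lattice {I : DyadicInterval} {x : ℤ} (hI : I.level ≤ k)
    (hx : x ∈ I.lattice k l) (hx' : x ≤ (l * 2 ^ k : ℕ)) : I.index < 2 ^ I.level := by
  refine lt_of_mul_lt_mul_right (a := I.width k l) ?_ (Nat.zero_le _)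
  rw [mul_comm (2 ^ _), width_mul_two_pow hI]
  exact_mod_cast (mem_Ioc.1 hx).1.trans_le hx'

lemma index_lt_of_inter_latticeBox_nonempty (hX : X ⊆ latticeBox k l fun _ => .unit)
    (hlevel : ∀ j, (C j).level ≤ k) (hne : (X ∩ latticeBox k l C).Nonempty) (j : ι) :
    (C j).index < 2 ^ (C j).level := by
  obtain ⟨x, hx⟩ := hne
  obtain ⟨hxX, hxC⟩ := mem_inter.1 hx
  have hxX' := hX hxX
  rw [latticeBox_unit] at hxX'
  exact DyadicInterval.index_lt_of_mem_lattice (hlevel j) (Fintype.mem_piFinset.1 hxC j)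
    (mem_Icc.1 (Fintype.mem_piFinset.1 hxX' j)).2

lemma abs_sub_mul_le_of_abs_sub_le_sqrt {L R N v t w δ : ℝ} (hv : 0 < v) (hw : 0 ≤ w) (hδ : 0 ≤ δ)
    (hL : |L - v / 2| ≤ √(t * (v / 2))) (hR : |R - v / 2| ≤ √(t * (v / 2)))
    (hN : |N - v| ≤ √(t * v)) (htv : 4 * t ≤ v) (hwv : 2 * t * w ^ 2 ≤ δ ^ 2 * v) :
    |L - R| * w ≤ 2 * δ * N := by
  have hhalf : v / 2 ≤ N := by
    have : √(t * v) ≤ v / 2 := Real.sqrt_le_iff.2 ⟨by positivity, by nlinarith⟩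
    linarith [(abs_le.1 hN).1]
  have hdiff : |L - R| ≤ 2 * √(t * (v / 2)) := by
    rw [abs_le] at *
    constructor <;> linarith
  have hcut : √(t * (v / 2)) * w ≤ δ * v / 2 := by
    rw [← Real.sqrt_sq hw, ← Real.sqrt_mul' _ (sq_nonneg w)]
    refine Real.sqrt_le_iff.2 ⟨by positivity, ?_⟩
    nlinarith [mul_le_mul_of_nonneg_left hwv hv.le]
  nlinarith [mul_le_mul_of_nonneg_right hdiff hw, mul_le_mul_of_nonneg_left hhalf hδ]

lemma HasSmallDiscrepancy.splitsEvenly (h : HasSmallDiscrepancy k l X s t)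
    (hX : X ⊆ latticeBox k l fun _ => .unit) (hs : 0 < s) (hδ : 0 ≤ δ)
    (hd : 2 ≤ Fintype.card ι) (hts : 4 * t ≤ (s / 2 ^ k) ^ Fintype.card ι)
    (htδ : 2 ^ (Fintype.card ι + 1) * t ≤ δ ^ 2 * (s / 2 ^ k) ^ (Fintype.card ι - 2)) :
    SplitsEvenly k l X s δ := by
  intro C i hlevel hi hbalanced
  rcases (X ∩ latticeBox k l C).eq_empty_or_nonempty with hempty | hne
  · have hsum := card_inter_latticeBox_left_add_right (l := l) X hi
    rw [hempty, card_empty, Nat.add_eq_zero_iff] at hsum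
    rw [hempty, hsum.1, hsum.2]
    simp
  have hindex := index_lt_of_inter_latticeBox_nonempty hX hlevel hne
  have hchild {I : DyadicInterval} (hI : I.level = (C i).level + 1)
      (hI' : I.index < 2 ^ I.level) :
      |(#(X ∩ latticeBox k l (Function.update C i I)) : ℝ) - meanCount s C / 2| ≤
        √(t * (meanCount s C / 2)) := by
    rw [← meanCount_update hI]
    exact h _ <| (Function.forall_update_iff C fun _ I => I.level ≤ k ∧ I.index < 2 ^ I.level).2
      ⟨⟨hI.trans_le hi, hI'⟩, fun j _ => ⟨hlevel j, hindex j⟩⟩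
  have hmean := pow_le_meanCount hs.le hlevel
  refine abs_sub_mul_le_of_abs_sub_le_sqrt (lt_of_lt_of_le (by positivity) hmean) (by positivity) hδ
    (hchild rfl ?_) (hchild rfl ?_) (h C fun j => ⟨hlevel j, hindex j⟩) (hts.trans hmean)
    (two_mul_mul_sq_le_sq_mul_meanCount hs hd htδ hi.le hbalanced)
  all_goals
    have := hindex i
    simp only [DyadicInterval.left, DyadicInterval.right, pow_succ]
    lia

end Discrepancy

section UnionBound

open Finset

/-- The dyadic intervals of level at most `k` in the unit interval. -/
def dyadicIntervals (k : ℕ) : Finset DyadicInterval :=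
  ((range (k + 1)).sigma fun r => range (2 ^ r)).map
    ⟨fun p => ⟨p.1, p.2⟩, fun p q h => by cases p; cases q; simp_all⟩

lemma mem_dyadicIntervals {k : ℕ} {I : DyadicInterval} :
    I ∈ dyadicIntervals k ↔ I.level ≤ k ∧ I.index < 2 ^ I.level := by
  simp only [dyadicIntervals, mem_map, mem_sigma, mem_range, Order.lt_add_one_iff]
  refine ⟨?_, fun h => ⟨⟨I.level, I.index⟩, h, rfl⟩⟩
  rintro ⟨p, hp, rfl⟩
  exact hp

lemma card_dyadicIntervals_le (k : ℕ) : #(dyadicIntervals k) ≤ 2 ^ (k + 1) := by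
  simp only [dyadicIntervals, card_map, card_sigma, card_range]
  exact (Nat.geomSum_lt le_rfl fun _ => mem_range.1).le

variable {ι : Type*} [Fintype ι] [DecidableEq ι] {k l n : ℕ} {t : ℝ} {C : ι → DyadicInterval}

lemma card_latticeBox_unit :
    #(latticeBox k l fun _ : ι => .unit) = (l * 2 ^ k) ^ Fintype.card ι := by
  rw [latticeBox_unit, Fintype.card_piFinset, prod_const, card_univ, Int.card_Icc,
    add_sub_cancel_right, Int.toNat_natCast]

lemma latticeBox_subset_unit (hC : ∀ j, C j ∈ dyadicIntervals k) :
    latticeBox k l C ⊆ latticeBox k l fun _ => .unit := by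
  rw [latticeBox_unit]
  exact Fintype.piFinset_subset _ _ fun j =>
    DyadicInterval.lattice_subset_Icc (mem_dyadicIntervals.1 (hC j)).1
      (mem_dyadicIntervals.1 (hC j)).2

lemma div_card_unit_mul_card_latticeBox (hl : 0 < l) (hlevel : ∀ j, (C j).level ≤ k) (s : ℝ) :
    s ^ Fintype.card ι / #(latticeBox k l fun _ : ι => .unit) * #(latticeBox k l C) =
      meanCount s C := by
  have hside (j : ι) : s / (l * 2 ^ k) * (C j).width k l = s / 2 ^ (C j).level := by
    have hwidth : ((C j).width k l : ℝ) * 2 ^ (C j).level = l * 2 ^ k := by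
      exact_mod_cast DyadicInterval.width_mul_two_pow (hlevel j)
    rw [← hwidth]
    have : ((C j).width k l : ℝ) ≠ 0 := left_ne_zero_of_mul (hwidth.trans_ne (by positivity))
    field_simp
  rw [meanCount, ← prod_congr rfl fun j _ => hside j, prod_mul_distrib, prod_const, card_univ,
    div_pow, card_latticeBox_unit, card_latticeBox]
  push_cast
  rfl

lemma card_filter_sqrt_lt_abs_card_inter_latticeBox_sub_le (hl : 0 < l) (hn : n ≤ l * 2 ^ k)
    (ht : 0 ≤ t) (htn : t ≤ (n / 2 ^ k) ^ Fintype.card ι) (hC : ∀ j, C j ∈ dyadicIntervals k) :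
    (#{X ∈ (latticeBox k l fun _ : ι => .unit).powersetCard (n ^ Fintype.card ι) |
        √(t * meanCount n C) < |(#(X ∩ latticeBox k l C) : ℝ) - meanCount n C|} : ℝ) ≤
      ((l * 2 ^ k) ^ Fintype.card ι).choose (n ^ Fintype.card ι) * (2 * Real.exp (-(t / 4))) := by
  have hlevel (j : ι) := (mem_dyadicIntervals.1 (hC j)).1
  have hmean := div_card_unit_mul_card_latticeBox hl hlevel n
  have htail := card_filter_sqrt_lt_abs_card_inter_sub_le (N := n ^ Fintype.card ι) (t := t)
    (latticeBox_subset_unit (l := l) hC)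
  rw [Nat.cast_pow, hmean, card_latticeBox_unit] at htail
  exact htail (Nat.pow_le_pow_left hn _) ht (htn.trans (pow_le_meanCount n.cast_nonneg hlevel))

open Classical in
lemma card_filter_not_hasSmallDiscrepancy_le (hl : 0 < l) (hn : n ≤ l * 2 ^ k) (ht : 0 ≤ t)
    (htn : t ≤ (n / 2 ^ k) ^ Fintype.card ι) :
    (#{X ∈ (latticeBox k l fun _ : ι => .unit).powersetCard (n ^ Fintype.card ι) |
        ¬HasSmallDiscrepancy k l X n t} : ℝ) ≤
      ((l * 2 ^ k) ^ Fintype.card ι).choose (n ^ Fintype.card ι) *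
        ((2 ^ (k + 1)) ^ Fintype.card ι * (2 * Real.exp (-(t / 4)))) := by
  set subsets := (latticeBox k l fun _ : ι => .unit).powersetCard (n ^ Fintype.card ι)
  set cells : Finset (ι → DyadicInterval) := Fintype.piFinset fun _ => dyadicIntervals k with hcells
  have hsubset : {X ∈ subsets | ¬HasSmallDiscrepancy k l X n t} ⊆ cells.biUnion fun C =>
      {X ∈ subsets | √(t * meanCount n C) <
        |(#(X ∩ latticeBox k l C) : ℝ) - meanCount n C|} := by
    intro X hX
    obtain ⟨hXV, hX⟩ := mem_filter.1 hX
    rw [HasSmallDiscrepancy] at hX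
    push Not at hX
    obtain ⟨C, hC, hlt⟩ := hX
    exact mem_biUnion.2 ⟨C, Fintype.mem_piFinset.2 fun j => mem_dyadicIntervals.2 (hC j),
      mem_filter.2 ⟨hXV, hlt⟩⟩
  have hcard : (#cells : ℝ) ≤ (2 ^ (k + 1)) ^ Fintype.card ι := by
    rw [hcells, Fintype.card_piFinset, prod_const, card_univ]
    exact_mod_cast Nat.pow_le_pow_left (card_dyadicIntervals_le k) _
  calc (#{X ∈ subsets | ¬HasSmallDiscrepancy k l X n t} : ℝ)
      ≤ ∑ C ∈ cells, (#{X ∈ subsets | √(t * meanCount n C) <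
          |(#(X ∩ latticeBox k l C) : ℝ) - meanCount n C|} : ℝ) := by
        exact_mod_cast (card_le_card hsubset).trans card_biUnion_le
    _ ≤ #cells * (((l * 2 ^ k) ^ Fintype.card ι).choose (n ^ Fintype.card ι) *
          (2 * Real.exp (-(t / 4)))) := by
        rw [← nsmul_eq_mul]
        exact sum_le_card_nsmul _ _ _ fun C hC =>
          card_filter_sqrt_lt_abs_card_inter_latticeBox_sub_le hl hn ht htn
            (Fintype.mem_piFinset.1 hC)
    _ ≤ _ := by
        rw [mul_left_comm]
        gcongr

end UnionBound

section Configurations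

open Finset

variable {d N : ℕ}

lemma card_config (m : ℕ) : Fintype.card (Config d m N) = (m ^ d).choose N := by
  simp [Fintype.card_finset_len]

lemma coe_gridPt_injective {m : ℤ} :
    Function.Injective fun (x : gridPt d m) i => (x i : ℤ) :=
  fun _ _ h => funext fun i => Subtype.ext (congrFun h i)

lemma toLattice_mem_powersetCard {m : ℕ} (S : Config d m N) :
    toLattice S.1 ∈ (grid d m).powersetCard N := by
  refine mem_powersetCard.2 ⟨image_subset_iff.2 fun x _ => ?_, ?_⟩
  · exact Fintype.mem_piFinset.2 fun i => (x i).2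
  · rw [toLattice, card_image_of_injective _ coe_gridPt_injective, S.2]

lemma ncard_setOf_toLattice_le {m : ℕ} (P : Finset (Fin d → ℤ) → Prop) [DecidablePred P] :
    {S : Config d m N | P (toLattice S.1)}.ncard ≤ #{X ∈ (grid d m).powersetCard N | P X} := by
  rw [← Set.ncard_coe_finset]
  exact Set.ncard_le_ncard_of_injOn (fun S => toLattice S.1)
    (fun S hS => mem_filter.2 ⟨toLattice_mem_powersetCard S, hS⟩)
    ((image_injective coe_gridPt_injective).comp Subtype.val_injective).injOn

end Configurations

section LogarithmicScale

open Finset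

variable {d k l n : ℕ} {X : Finset (Fin d → ℤ)} {e t δ L T : ℝ}

lemma HasSmallDiscrepancy.Fleast_le (h : HasSmallDiscrepancy k l X n t) (hd : 2 ≤ d) (hn : 0 < n)
    (hnl : n ≤ l * 2 ^ k) (hX : X ∈ (grid d (l * 2 ^ k)).powersetCard (n ^ d)) (hδ : 0 ≤ δ)
    (htn : 4 * t ≤ (n / 2 ^ k) ^ d) (htδ : 2 ^ (d + 1) * t ≤ δ ^ 2 * (n / 2 ^ k) ^ (d - 2)) :
    Fleast d n X ≤ √d * (1 + 2 * (n / 2 ^ k + d * k * δ + 1)) := by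
  obtain ⟨hsub, hcard⟩ := mem_powersetCard.1 hX
  rw [grid, ← latticeBox_unit] at hsub
  have hl : 0 < l := Nat.pos_of_mul_pos_right (hn.trans_le hnl)
  have heven : SplitsEvenly k l X n δ :=
    h.splitsEvenly hsub (Nat.cast_pos.2 hn) hδ (by simpa) (by simpa) (by simpa)
  obtain ⟨f, hinj, hf⟩ := heven.exists_injOn hl hδ hsub (by simpa)
  have hq : (n : ℝ) / (l * 2 ^ k) ≤ 1 := div_le_one_of_le₀ (by exact_mod_cast hnl) (by positivity)
  refine _root_.Fleast_le hcard hinj (fun x hx => (hf x hx).1) (by positivity) hq (by positivity)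
    fun x hx i => ?_
  simpa using (hf x hx).2 i

lemma two_pow_mul_le_sq_mul_pow_sub_two {s : ℝ} (hd : 2 ≤ d) (hL : 0 < L) (hLs : L ^ 3 ≤ s ^ d) :
    2 ^ (d + 1) * (16 * d * L) ≤ (8 * d * 2 ^ d * s / L) ^ 2 * s ^ (d - 2) := by
  have hd' : (1 : ℝ) ≤ d := by exact_mod_cast one_le_two.trans hd
  have hpow : (1 : ℝ) ≤ 2 ^ d := one_le_pow₀ one_le_two
  calc 2 ^ (d + 1) * (16 * d * L) = 32 * (d * 1) * (2 ^ d * 1) * L := by ring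
    _ ≤ 64 * (d * d) * (2 ^ d * 2 ^ d) * L := by gcongr; norm_num
    _ = (8 * d * 2 ^ d / L) ^ 2 * L ^ 3 := by
        field_simp
        ring
    _ ≤ (8 * d * 2 ^ d / L) ^ 2 * s ^ d := by gcongr
    _ = (8 * d * 2 ^ d * s / L) ^ 2 * s ^ (d - 2) := by
        rw [← pow_mul_pow_sub s hd]
        ring

lemma four_mul_mul_le_cube (hd : 1 ≤ d) (hdL : 64 * d ≤ L) : 4 * (16 * d * L) ≤ L ^ 3 := by
  have hL : 1 ≤ L := by
    have : (1 : ℝ) ≤ d := by exact_mod_cast hd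
    linarith
  calc 4 * (16 * d * L) = 64 * d * (L * 1) := by ring
    _ ≤ L * (L * L) := by gcongr
    _ = L ^ 3 := by ring

lemma HasSmallDiscrepancy.Fleast_le_mul (h : HasSmallDiscrepancy k l X n (16 * d * L)) (hd : 2 ≤ d)
    (hn : 0 < n) (hnl : n ≤ l * 2 ^ k) (hX : X ∈ (grid d (l * 2 ^ k)).powersetCard (n ^ d))
    (hdL : 64 * d ≤ L) (hkL : k ≤ L) (hLn : L ^ 3 ≤ (n / 2 ^ k) ^ d) (hT : 1 ≤ T)
    (hnT : n / 2 ^ k ≤ 2 * T) :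
    Fleast d n X ≤ √d * (7 + 32 * d ^ 2 * 2 ^ d) * T := by
  have hd' : (1 : ℝ) ≤ d := by exact_mod_cast one_le_two.trans hd
  have hL : 0 < L := by linarith
  refine (h.Fleast_le (δ := 8 * d * 2 ^ d * (n / 2 ^ k) / L) hd hn hnl hX (by positivity)
    ((four_mul_mul_le_cube (one_le_two.trans hd) hdL).trans hLn)
    (two_pow_mul_le_sq_mul_pow_sub_two hd hL hLn)).trans ?_
  rw [mul_assoc √d]
  refine mul_le_mul_of_nonneg_left ?_ (Real.sqrt_nonneg d)
  calc 1 + 2 * (n / 2 ^ k + d * k * (8 * d * 2 ^ d * (n / 2 ^ k) / L) + 1)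
      = 3 + 2 * (n / 2 ^ k) * (1 + 8 * d ^ 2 * 2 ^ d * (k / L)) := by ring
    _ ≤ 3 * T + 2 * (2 * T) * (1 + 8 * d ^ 2 * 2 ^ d * 1) := by
        gcongr
        · linarith
        · exact div_le_one_of_le₀ hkL hL.le
    _ = (7 + 32 * d ^ 2 * 2 ^ d) * T := by ring

lemma ncard_mul_lt_Fleast_le (hd : 2 ≤ d) (hn : 0 < n) (hnl : n ≤ l * 2 ^ k) (hdL : 64 * d ≤ L)
    (hkL : k ≤ L) (hLn : L ^ 3 ≤ (n / 2 ^ k) ^ d) (hT : 1 ≤ T) (hnT : n / 2 ^ k ≤ 2 * T) :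
    ({S : Config d (l * 2 ^ k : ℕ) (n ^ d) | √d * (7 + 32 * d ^ 2 * 2 ^ d) * T <
        Fleast d n (toLattice S.1)}.ncard : ℝ) ≤
      Fintype.card (Config d (l * 2 ^ k : ℕ) (n ^ d)) *
        ((2 ^ (k + 1)) ^ d * (2 * Real.exp (-(16 * d * L / 4)))) := by
  classical
  have hL : 0 ≤ L := k.cast_nonneg.trans hkL
  have hsubset : {S : Config d (l * 2 ^ k : ℕ) (n ^ d) | √d * (7 + 32 * d ^ 2 * 2 ^ d) * T <
      Fleast d n (toLattice S.1)} ⊆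
        {S | ¬HasSmallDiscrepancy k l (toLattice S.1) n (16 * d * L)} := fun S hS hsmall =>
    (hsmall.Fleast_le_mul hd hn hnl (toLattice_mem_powersetCard S) hdL hkL hLn hT hnT).not_gt hS
  have hunion := card_filter_not_hasSmallDiscrepancy_le (ι := Fin d) (n := n) (t := 16 * d * L)
    (Nat.pos_of_mul_pos_right (hn.trans_le hnl)) hnl (by positivity) (by
      rw [Fintype.card_fin]
      linarith [four_mul_mul_le_cube (one_le_two.trans hd) hdL,
        show 0 ≤ 16 * d * L by positivity])
  rw [Fintype.card_fin, latticeBox_unit, ← card_config] at hunion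
  refine le_trans ?_ hunion
  exact_mod_cast (Set.ncard_le_ncard hsubset).trans
    (ncard_setOf_toLattice_le fun X => ¬HasSmallDiscrepancy k l X n (16 * d * L))

lemma two_pow_mul_exp_logb_le (hd : d ≠ 0) (hn : 2 ≤ n) (hk : 2 ^ k ≤ n) :
    (2 ^ (k + 1)) ^ d * (2 * Real.exp (-(16 * d * Real.logb 2 n / 4))) ≤ 2 / (n : ℝ) ^ 2 := by
  have hn' : (2 : ℝ) ≤ n := by exact_mod_cast hn
  have hlog : Real.log n ≤ Real.logb 2 n := by
    rw [Real.logb, le_div_iff₀ (Real.log_pos one_lt_two)]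
    exact mul_le_of_le_one_right (Real.log_nonneg (by linarith)) (by linarith [Real.log_two_lt_d9])
  have hexp : Real.exp (-(16 * d * Real.logb 2 n / 4)) ≤ ((n : ℝ) ^ (4 * d))⁻¹ := by
    rw [← Real.exp_log (show 0 < ((n : ℝ) ^ (4 * d))⁻¹ by positivity), Real.log_inv, Real.log_pow,
      Real.exp_le_exp]
    push_cast
    nlinarith [mul_le_mul_of_nonneg_left hlog d.cast_nonneg (α := ℝ)]
  have hcells : (2 : ℝ) ^ (k + 1) ≤ n ^ 2 := by
    rw [pow_succ, sq]
    gcongr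
    exact_mod_cast hk
  calc (2 ^ (k + 1)) ^ d * (2 * Real.exp (-(16 * d * Real.logb 2 n / 4)))
      ≤ ((n : ℝ) ^ 2) ^ d * (2 * ((n : ℝ) ^ (4 * d))⁻¹) := by gcongr
    _ = 2 / (n : ℝ) ^ (2 * d) := by
        rw [show 4 * d = 2 * d + 2 * d by ring, pow_add, ← pow_mul]
        field_simp
    _ ≤ 2 / (n : ℝ) ^ 2 := by
        gcongr
        · linarith
        · lia

/-- The side length `m` is at least `n` and admits a dyadic subdivision into `2 ^ k` intervals of
equal integer length, where `n / 2 ^ k` is between `T` and `2 * T`. -/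
def IsDyadicSide (T : ℝ) (n : ℕ) (m : ℤ) : Prop :=
  ∃ k l : ℕ, m = (l * 2 ^ k : ℕ) ∧ n ≤ l * 2 ^ k ∧ T ≤ n / 2 ^ k ∧ n / 2 ^ k ≤ 2 * T

lemma exists_isDyadicSide_of_le (he : 1 ≤ e) (hT : 0 < T) (hTn : T ≤ n) :
    ∃ c, e ≤ c ∧ c - e ≤ 1 / T ∧ IsDyadicSide T n ⌊c * n⌋ := by
  have hn : (0 : ℝ) < n := hT.trans_le hTn
  obtain ⟨k, hk, hk'⟩ := exists_nat_pow_near ((one_le_div hT).2 hTn) one_lt_two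
  have hTk : T ≤ n / 2 ^ k := by
    rw [le_div_iff₀ hT] at hk
    rw [le_div_iff₀ (by positivity)]
    linarith
  have hkT : n / 2 ^ k ≤ 2 * T := by
    rw [div_lt_iff₀ hT, pow_succ] at hk'
    rw [div_le_iff₀ (by positivity)]
    linarith
  set l := ⌈e * n / 2 ^ k⌉₊
  have hl : e * n ≤ l * 2 ^ k := (div_le_iff₀ (by positivity)).1 (Nat.le_ceil _)
  have hl' : l * 2 ^ k ≤ e * n + 2 ^ k := by
    have := (Nat.ceil_lt_add_one (show 0 ≤ e * n / 2 ^ k by positivity)).le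
    calc l * 2 ^ k ≤ (e * n / 2 ^ k + 1) * 2 ^ k := by gcongr
      _ = e * n + 2 ^ k := by field_simp
  refine ⟨l * 2 ^ k / n, (le_div_iff₀ hn).2 hl, ?_, k, l, ?_, ?_, hTk, hkT⟩
  · calc l * 2 ^ k / n - e ≤ (e * n + 2 ^ k) / n - e := by gcongr
      _ = 1 / (n / 2 ^ k) := by
          field_simp
          ring
      _ ≤ 1 / T := by gcongr
  · rw [div_mul_cancel₀ _ hn.ne']
    exact_mod_cast Int.floor_natCast (R := ℝ) (l * 2 ^ k)
  · have : (n : ℝ) ≤ l * 2 ^ k := (le_mul_of_one_le_left hn.le he).trans hl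
    exact_mod_cast this

lemma exists_isDyadicSide (he : 1 ≤ e) (hT : 0 ≤ T) (n : ℕ) :
    ∃ c, e ≤ c ∧ c - e ≤ 1 / T ∧ (0 < T → T ≤ n → IsDyadicSide T n ⌊c * n⌋) := by
  by_cases h : 0 < T ∧ T ≤ n
  · obtain ⟨c, hec, hce, hc⟩ := exists_isDyadicSide_of_le he h.1 h.2
    exact ⟨c, hec, hce, fun _ _ => hc⟩
  · exact ⟨e, le_rfl, by simpa using hT, fun hT hTn => (h ⟨hT, hTn⟩).elim⟩

lemma ncard_mul_logb_lt_Fleast_le (hd : 2 ≤ d) (hn : 2 ≤ n) (hdn : 64 * d ≤ Real.logb 2 n) {m : ℤ}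
    (hm : IsDyadicSide (Real.logb 2 n ^ (3 / d : ℝ)) n m) :
    ({S : Config d m (n ^ d) | √d * (7 + 32 * d ^ 2 * 2 ^ d) * Real.logb 2 n ^ (3 / d : ℝ) <
        Fleast d n (toLattice S.1)}.ncard : ℝ) ≤
      2 / (n : ℝ) ^ 2 * Fintype.card (Config d m (n ^ d)) := by
  obtain ⟨k, l, rfl, hnl, hTk, hkT⟩ := hm
  set L := Real.logb 2 n
  have hd' : (1 : ℝ) ≤ d := by exact_mod_cast one_le_two.trans hd
  have hL : 0 < L := by linarith
  have hT : 1 ≤ L ^ (3 / d : ℝ) := Real.one_le_rpow (by linarith) (by positivity)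
  have hLn : L ^ 3 ≤ (n / 2 ^ k) ^ d := by
    calc L ^ 3 = (L ^ (3 / d : ℝ)) ^ d := by
          rw [← Real.rpow_mul_natCast hL.le, div_mul_cancel₀ _ (by positivity)]
          norm_cast
      _ ≤ (n / 2 ^ k) ^ d := by gcongr
  have hk : 2 ^ k ≤ n := by exact_mod_cast (one_le_div (by positivity)).1 (hT.trans hTk)
  have hkL : k ≤ L := by
    rw [Real.le_logb_iff_rpow_le one_lt_two (by positivity), Real.rpow_natCast]
    exact_mod_cast hk
  refine (ncard_mul_lt_Fleast_le hd (by lia) hnl hdn hkL hLn hT hkT).trans ?_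
  rw [mul_comm]
  gcongr
  exact two_pow_mul_exp_logb_le (by lia) hn hk

end LogarithmicScale

section AlmostSureBound

lemma ae_eventually_notMem_of_ncard_le {Ω : ℕ → Type*} [∀ n, Fintype (Ω n)]
    [∀ n, MeasurableSpace (Ω n)] {μ : Measure (∀ n, Ω n)} {A : ∀ n, Set (Ω n)} {b : ℕ → ℝ}
    (hμ : ∀ n, μ {ω | ω n ∈ A n} = (A n).ncard / Fintype.card (Ω n)) (hb : Summable b)
    (hA : ∀ᶠ n in Filter.atTop, ((A n).ncard : ℝ) ≤ b n * Fintype.card (Ω n)) :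
    ∀ᵐ ω ∂μ, ∀ᶠ n in Filter.atTop, ω n ∉ A n := by
  obtain ⟨n₀, hn₀⟩ := Filter.eventually_atTop.1 hA
  have hle (n : ℕ) : μ {ω | ω (n + n₀) ∈ A (n + n₀)} ≤ ENNReal.ofReal (b (n + n₀)) := by
    rw [hμ]
    refine ENNReal.div_le_of_le_mul ?_
    rw [← ENNReal.ofReal_natCast, ← ENNReal.ofReal_natCast,
      ← ENNReal.ofReal_mul' (Nat.cast_nonneg _)]
    exact ENNReal.ofReal_le_ofReal (hn₀ _ (Nat.le_add_left _ _))
  have hsum : ∑' n, μ {ω | ω (n + n₀) ∈ A (n + n₀)} ≠ ⊤ :=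
    ne_top_of_le_ne_top ((summable_nat_add_iff n₀).2 hb).tsum_ofReal_ne_top
      (ENNReal.tsum_le_tsum hle)
  filter_upwards [ae_eventually_notMem hsum] with ω hω
  rw [← Filter.map_add_atTop_eq_nat n₀]
  exact hω

lemma tendsto_logb_natCast_atTop :
    Filter.Tendsto (fun n : ℕ => Real.logb 2 n) Filter.atTop Filter.atTop :=
  (Real.tendsto_logb_atTop one_lt_two).comp tendsto_natCast_atTop_atTop

lemma eventually_logb_rpow_le (a : ℝ) : ∀ᶠ n : ℕ in Filter.atTop, Real.logb 2 n ^ a ≤ n := by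
  have hlog2 : 0 < Real.log 2 := Real.log_pos one_lt_two
  have hsmall := (isLittleO_log_rpow_rpow_atTop a one_pos).bound (Real.rpow_pos_of_pos hlog2 a)
  filter_upwards [tendsto_natCast_atTop_atTop.eventually hsmall] with n hn
  have hlog : 0 ≤ Real.log n := Real.log_natCast_nonneg n
  rw [Real.rpow_one, Real.norm_of_nonneg (by positivity), Real.norm_of_nonneg (by positivity)] at hn
  rw [Real.logb, Real.div_rpow hlog hlog2.le]
  exact (div_le_iff₀' (by positivity)).2 hn

lemma limsup_div_logb_rpow_lt_top {F : ℕ → ℝ} {K a b : ℝ} (hab : a ≤ b)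
    (h : ∀ᶠ n in Filter.atTop, F n ≤ K * Real.logb 2 n ^ a) :
    Filter.limsup (fun n => ((F n / Real.logb 2 n ^ b : ℝ) : EReal)) Filter.atTop < ⊤ := by
  refine (Filter.limsup_le_of_le (a := ((|K| : ℝ) : EReal)) (h := ?_)).trans_lt
    (EReal.coe_lt_top _)
  filter_upwards [h, tendsto_logb_natCast_atTop.eventually_ge_atTop 1] with n hn hlog
  refine EReal.coe_le_coe_iff.2 <| (div_le_iff₀ (by positivity)).2 <| hn.trans ?_
  gcongr
  exact le_abs_self K

theorem stmt_1_general (d : ℕ) (hd : 2 ≤ d) (e : ℕ → ℝ) (he : ∀ n, 1 ≤ e n) :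
    ∃ c : ℕ → ℝ, (∀ n, 1 ≤ c n) ∧
      (∀ n : ℕ, 2 ≤ n → |c n - e n| ≤ 1 / Real.logb 2 n ^ (3 / d : ℝ)) ∧
      ∀ α : ℝ, 3 ≤ α → ∀ μ : Measure (∀ n : ℕ, Config d ⌊c n * n⌋ (n ^ d)),
        (∀ (n : ℕ) (A : Set (Config d ⌊c n * n⌋ (n ^ d))), μ {ω | ω n ∈ A} =
          A.ncard / Fintype.card (Config d ⌊c n * n⌋ (n ^ d))) →
        ∀ᵐ ω ∂μ, Filter.limsup (fun n : ℕ => ((Fleast d n (toLattice (ω n).1) /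
          Real.logb 2 n ^ (α / d) : ℝ) : EReal)) Filter.atTop < ⊤ := by
  have hlog (n : ℕ) : 0 ≤ Real.logb 2 n ^ (3 / d : ℝ) :=
    Real.rpow_nonneg (div_nonneg (Real.log_natCast_nonneg n) (Real.log_nonneg one_le_two)) _
  choose c hec hce hdyadic using fun n => exists_isDyadicSide (he n) (hlog n) n
  refine ⟨c, fun n => (he n).trans (hec n), fun n _ => ?_, fun α hα μ hμ => ?_⟩
  · exact (abs_of_nonneg (sub_nonneg.2 (hec n))).trans_le (hce n)
  have hrare : ∀ᵐ ω ∂μ, ∀ᶠ n : ℕ in Filter.atTop, ω n ∉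
      {S | √d * (7 + 32 * d ^ 2 * 2 ^ d) * Real.logb 2 n ^ (3 / d : ℝ) <
        Fleast d n (toLattice S.1)} := by
    refine ae_eventually_notMem_of_ncard_le (fun n => hμ n _)
      ((Real.summable_nat_pow_inv.2 one_lt_two).mul_left 2) ?_
    filter_upwards [tendsto_logb_natCast_atTop.eventually_ge_atTop (64 * d),
      Filter.eventually_ge_atTop 2, eventually_logb_rpow_le (3 / d)] with n hdn hn hle
    have hpos : 0 < Real.logb 2 n := Real.logb_pos one_lt_two (by exact_mod_cast hn)
    exact ncard_mul_logb_lt_Fleast_le hd hn hdn (hdyadic n (by positivity) hle)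
  filter_upwards [hrare] with ω hω
  exact limsup_div_logb_rpow_lt_top (by gcongr) (hω.mono fun n hn => not_lt.1 hn)

end AlmostSureBound

lemma one_div_logb_rpow_three_div_le {d n : ℕ} (hn : 2 ≤ n) :
    1 / Real.logb 2 n ^ (3 / d : ℝ) ≤ 2 ^ (d + 8) / Real.logb 2 n ^ (d : ℝ)⁻¹ := by
  have hlog : 1 ≤ Real.logb 2 n := by
    rw [← Real.logb_self_eq_one one_lt_two]
    gcongr
    · exact one_lt_two
    · exact_mod_cast hn
  have hexp : (d : ℝ)⁻¹ ≤ 3 / d := by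
    rw [inv_eq_one_div]
    gcongr
    norm_num
  gcongr
  exact one_le_pow₀ one_le_two

section Cylinders

variable {ι : Type*} {Ω : ι → Type*} [∀ i, Fintype (Ω i)] [∀ i, MeasurableSpace (Ω i)]
  {μ : Measure (∀ i, Ω i)}

lemma isProbabilityMeasure_of_cylinders
    (hμ : ∀ (J : Finset ι) (A : ∀ i, Set (Ω i)), μ {ω | ∀ i ∈ J, ω i ∈ A i} =
      ∏ i ∈ J, ((A i).ncard : ENNReal) / (Fintype.card (Ω i) : ENNReal)) :
    IsProbabilityMeasure μ :=
  ⟨by simpa using hμ ∅ fun _ => Set.univ⟩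

lemma measure_eval_mem_of_cylinders
    (hμ : ∀ (J : Finset ι) (A : ∀ i, Set (Ω i)), μ {ω | ∀ i ∈ J, ω i ∈ A i} =
      ∏ i ∈ J, ((A i).ncard : ENNReal) / (Fintype.card (Ω i) : ENNReal))
    (i : ι) (A : Set (Ω i)) :
    μ {ω | ω i ∈ A} = A.ncard / Fintype.card (Ω i) := by
  classical
  simpa using hμ {i} (Function.update (fun _ => Set.univ) i A)

end Cylinders

/-- For `d ≥ 2` and any sequence `e_n ≥ 1` there is a sequence `c_n ≥ 1` with
`|c_n − e_n| ≤ 2^(d+8)/(log₂ n)^(1/d)` such that for every `α > 3`, a random sequence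
`(S_n)` in `𝒢_{(c_n)}` (whose uniform product measure is characterised by its values
on cylinders, as in the hypothesis on `μ`) almost surely satisfies
`limsup_n F_n(S_n)·(log₂ n)^(−α/d) < ∞`. -/
theorem stmt_1 (d : ℕ) (hd : 2 ≤ d) (e : ℕ → ℝ) (he : ∀ n : ℕ, 1 ≤ e n) :
    ∃ c : ℕ → ℝ, (∀ n : ℕ, 0 < c n ∧ 1 ≤ c n) ∧
      (∀ n : ℕ, 2 ≤ n → |c n - e n| ≤ 2 ^ (d + 8) / Real.logb 2 n ^ ((d : ℝ)⁻¹)) ∧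
      ∀ α : ℝ, 3 < α →
        ∀ μ : Measure (∀ n : ℕ, Config d ⌊c n * n⌋ (n ^ d)),
          (∀ (J : Finset ℕ) (A : ∀ n : ℕ, Set (Config d ⌊c n * n⌋ (n ^ d))),
            μ {ω | ∀ n ∈ J, ω n ∈ A n} =
              ∏ n ∈ J, (Set.ncard (A n) : ENNReal) /
                (Fintype.card (Config d ⌊c n * n⌋ (n ^ d)) : ENNReal)) →
          μ {ω | Filter.limsup
              (fun n : ℕ =>
                ((Fleast d n (toLattice (ω n).1) /
                    Real.logb 2 n ^ (α / (d : ℝ)) : ℝ) : EReal))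
              Filter.atTop < (⊤ : EReal)} = 1 := by
  obtain ⟨c, hc, hce, hlimsup⟩ := stmt_1_general d hd e he
  refine ⟨c, fun n => ⟨one_pos.trans_le (hc n), hc n⟩,
    fun n hn => (hce n hn).trans (one_div_logb_rpow_three_div_le hn), fun α hα μ hμ => ?_⟩
  have := isProbabilityMeasure_of_cylinders hμ
  have hae := hlimsup α hα.le μ (measure_eval_mem_of_cylinders hμ)
  rw [measure_congr (Filter.eventuallyEq_univ.2 hae), measure_univ]
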